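/- Let τ ≥ 1 be an integer and A, B ≥ 0 with A·τ² ≤ 1/2. Let a, b : {0,1,…,τ} → [0,∞) be sequences such that for every t with 0 ≤ t ≤ τ, a_t ≤ A·t·Σ_{t'=0}^{t−1} a_{t'} + B·t·Σ_{t'=0}^{t−1} b_{t'}. Then for every t with 0 ≤ t ≤ τ, a_t ≤ (2ABτ³ + Bτ)·Σ_{t'=0}^{t−1} b_{t'}. -/

import Mathlib

open Finset

theorem stmt5 (τ : ℕ) (hτ : 1 ≤ τ) (A B : ℝ) (hA : 0 ≤ A) (hB : 0 ≤ B)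
    (hAτ : A * (τ : ℝ) ^ 2 ≤ 1 / 2)
    (a b : ℕ → ℝ)
    (ha : ∀ t ≤ τ, 0 ≤ a t) (hb : ∀ t ≤ τ, 0 ≤ b t)
    (hrec : ∀ t ≤ τ, a t ≤ A * (t : ℝ) * (∑ t' ∈ Finset.range t, a t') +
      B * (t : ℝ) * (∑ t' ∈ Finset.range t, b t')) :
    ∀ t ≤ τ, a t ≤ (2 * A * B * (τ : ℝ) ^ 3 + B * τ) * ∑ t' ∈ Finset.range t, b t' := by
  intro t
  induction t using Nat.strong_induction_on with
  | _ t ih =>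
  intro ht
  set C : ℝ := 2 * A * B * (τ : ℝ) ^ 3 + B * τ with hC
  set S : ℝ := ∑ t' ∈ Finset.range t, b t' with hS
  have hC0 : 0 ≤ C := by positivity
  have hS0 : 0 ≤ S := Finset.sum_nonneg fun i hi => hb i (by
    have := Finset.mem_range.1 hi
    omega)
  have hsum : ∑ t' ∈ Finset.range t, a t' ≤ t * (C * S) := by
    have h : ∀ i ∈ Finset.range t, a i ≤ C * S := by
      intro i hi
      have hi' := Finset.mem_range.1 hi
      refine (ih i hi' (by omega)).trans (mul_le_mul_of_nonneg_left ?_ hC0)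
      refine Finset.sum_le_sum_of_subset_of_nonneg
        (Finset.range_subset_range.2 hi'.le) fun j hj _ => hb j ?_
      have := Finset.mem_range.1 hj
      omega
    simpa using Finset.sum_le_card_nsmul _ _ _ h
  have htτ : (t : ℝ) ≤ τ := by exact_mod_cast ht
  have hx0 : 0 ≤ A * (τ : ℝ) ^ 2 := by positivity
  have hBτ : 0 ≤ B * (τ : ℝ) := by positivity
  have hkey : A * (τ : ℝ) ^ 2 * C + B * τ ≤ C := by
    have h1 : 0 ≤ B * (τ : ℝ) * (A * (τ : ℝ) ^ 2 * (1 - 2 * (A * (τ : ℝ) ^ 2))) :=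
      mul_nonneg hBτ (mul_nonneg hx0 (by linarith))
    rw [hC]
    nlinarith [h1]
  calc a t ≤ A * (t : ℝ) * (∑ t' ∈ Finset.range t, a t') + B * (t : ℝ) * S := hrec t ht
    _ ≤ A * (t : ℝ) * (t * (C * S)) + B * (t : ℝ) * S := by gcongr
    _ ≤ A * (τ : ℝ) * (τ * (C * S)) + B * (τ : ℝ) * S := by gcongr
    _ = (A * (τ : ℝ) ^ 2 * C + B * τ) * S := by ring
    _ ≤ C * S := mul_le_mul_of_nonneg_right hkey hS0
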